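/- For every N ≥ 2, β > 0, J > 0 and b ≥ 0, setting A = S_1^z S_2^z, one has the identity −(2/(N−1)) · E[⟨U_N⟩] = βJ · E[⟨A|A⟩ − ⟨A⟩²], where ⟨A|A⟩ is the Duhamel–Kubo–Bogolyubov product of A with itself with respect to the Gibbs state of H_N. -/

import Mathlib

open Matrix MeasureTheory ProbabilityTheory

noncomputable section

abbrev Conf (N : ℕ) := Fin N → Fin 2

def Sz (N : ℕ) (j : Fin N) : Matrix (Conf N) (Conf N) ℂ :=
  Matrix.diagonal fun σ => if σ j = 0 then 1 else -1

def Sx (N : ℕ) (j : Fin N) : Matrix (Conf N) (Conf N) ℂ :=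
  Matrix.of fun σ τ => if τ = Function.update σ j (1 - σ j) then 1 else 0

def UN (N : ℕ) (g : Fin N → Fin N → ℝ) : Matrix (Conf N) (Conf N) ℂ :=
  (-(1 / Real.sqrt N)) • ∑ j : Fin N, ∑ k : Fin N,
    if j < k then g j k • (Sz N j * Sz N k) else 0

def HN (N : ℕ) (J b : ℝ) (g : Fin N → Fin N → ℝ) : Matrix (Conf N) (Conf N) ℂ :=
  J • UN N g - b • ∑ j : Fin N, Sx N j

/-- Gibbs expectation (real part of the trace ratio). -/
def gibbs {n : Type*} [Fintype n] [DecidableEq n] (β : ℝ) (H A : Matrix n n ℂ) : ℝ :=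
  ((NormedSpace.exp ((-β) • H) * A).trace / (NormedSpace.exp ((-β) • H)).trace).re

/-- Duhamel–Kubo–Bogolyubov product `⟨A|B⟩`. -/
def duhamel {n : Type*} [Fintype n] [DecidableEq n] (β : ℝ) (H A B : Matrix n n ℂ) : ℝ :=
  ∫ t in (0:ℝ)..1,
    gibbs β H (NormedSpace.exp ((t * β) • H) * Aᴴ *
      NormedSpace.exp ((-(t * β)) • H) * B)

/-!
Write `H = B + c ∑ p, x p A p` with one independent standard Gaussian `x p` for each bond `p`.
Duhamel's formula for the derivative of the matrix exponential gives
`∂⟨A p⟩/∂(x p) = -βc (⟨A p|A p⟩ - ⟨A p⟩²)`, so Gaussian integration by parts turns each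
`E[x p ⟨A p⟩]` into a Duhamel covariance. Permuting the sites preserves the law of the couplings
and the transverse field, hence all `N(N-1)/2` bonds contribute equally. In an eigenbasis of `H`,
`⟨A|A⟩` and `⟨A⟩²` are at most `Tr(A*A)` uniformly in the couplings, which provides the
integrability.
-/

section Exponential

theorem hasDerivAt_exp_add_smul {𝔸 : Type*} [NormedRing 𝔸] [NormedAlgebra ℝ 𝔸] [CompleteSpace 𝔸]
    (X Y : 𝔸) :
    HasDerivAt (fun s : ℝ => NormedSpace.exp (X + s • Y))
      (∫ t in (0 : ℝ)..1, NormedSpace.exp ((1 - t) • X) * Y * NormedSpace.exp (t • X)) 0 := by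
  let _ : NormedAlgebra ℚ 𝔸 := NormedAlgebra.restrictScalars ℚ ℝ 𝔸
  have : Continuous (NormedSpace.exp : 𝔸 → 𝔸) := NormedSpace.exp_continuous
  let F : ℝ → ℝ → 𝔸 := fun s t =>
    NormedSpace.exp ((1 - t) • X) * Y * NormedSpace.exp (t • (X + s • Y))
  have F_continuous : Continuous (Function.uncurry F) := by
    simp only [F, Function.uncurry_def]
    fun_prop
  have duhamel_formula : ∀ s : ℝ,
      NormedSpace.exp (X + s • Y) - NormedSpace.exp X = s • ∫ t in (0 : ℝ)..1, F s t := by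
    intro s
    have interpolation : ∀ t ∈ Set.uIcc (0 : ℝ) 1, HasDerivAt
        (fun t : ℝ => NormedSpace.exp ((1 - t) • X) * NormedSpace.exp (t • (X + s • Y)))
        (s • F s t) t := by
      intro t _
      have left := (hasDerivAt_exp_smul_const X (1 - t)).scomp t ((hasDerivAt_id t).const_sub 1)
      have right := hasDerivAt_exp_smul_const' (X + s • Y) t
      refine (left.mul right).congr_deriv ?_
      simp only [F, Function.comp, neg_smul, one_smul, mul_add, add_mul, mul_smul_comm,
        smul_mul_assoc, neg_mul, mul_assoc]
      abel
    have integrable : IntervalIntegrable (fun t => s • F s t) volume 0 1 :=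
      ((F_continuous.comp (Continuous.prodMk_right s)).const_smul s).intervalIntegrable _ _
    rw [← intervalIntegral.integral_smul,
      intervalIntegral.integral_eq_sub_of_hasDerivAt interpolation integrable]
    simp
  have slope_tendsto : Filter.Tendsto (fun s => ∫ t in (0 : ℝ)..1, F s t) (nhdsWithin 0 {0}ᶜ)
      (nhds (∫ t in (0 : ℝ)..1, F 0 t)) :=
    (intervalIntegral.continuous_parametric_intervalIntegral_of_continuous'
      F_continuous 0 1).continuousAt.mono_left nhdsWithin_le_nhds
  simp only [F, zero_smul, add_zero] at slope_tendsto
  refine hasDerivAt_iff_tendsto_slope.2 (slope_tendsto.congr' ?_)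
  filter_upwards [self_mem_nhdsWithin] with s hs
  rw [slope_def_module, zero_smul, add_zero, duhamel_formula, sub_zero, inv_smul_smul₀ hs]

theorem exp_convex_combination_le_sum {ι : Type*} [Fintype ι] (a : ι → ℝ) {t : ℝ}
    (ht : t ∈ Set.Icc (0 : ℝ) 1) (i j : ι) :
    Real.exp ((1 - t) * a j + t * a i) ≤ ∑ k, Real.exp (a k) := by
  have exp_le : ∀ i, Real.exp (a i) ≤ ∑ k, Real.exp (a k) := fun i =>
    Finset.single_le_sum (f := fun k => Real.exp (a k)) (fun _ _ => (Real.exp_pos _).le)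
      (Finset.mem_univ i)
  have one_sub_nonneg : 0 ≤ 1 - t := sub_nonneg.2 ht.2
  have convexity := convexOn_exp.2 (Set.mem_univ (a j)) (Set.mem_univ (a i)) one_sub_nonneg ht.1
    (sub_add_cancel 1 t)
  simp only [smul_eq_mul] at convexity
  nlinarith [mul_le_mul_of_nonneg_left (exp_le j) one_sub_nonneg,
    mul_le_mul_of_nonneg_left (exp_le i) ht.1]

end Exponential

section MatrixExponential

open scoped Norms.Operator

theorem isHermitian_real_smul {n : Type*} {X : Matrix n n ℂ} (hX : X.IsHermitian) (c : ℝ) :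
    (c • X).IsHermitian :=
  hX.smul (IsSelfAdjoint.all c)

theorem sum_submatrix {m n R ι : Type*} [AddCommMonoid R] (s : Finset ι) (X : ι → Matrix n n R)
    (e : m → n) : (∑ p ∈ s, X p).submatrix e e = ∑ p ∈ s, (X p).submatrix e e := by
  ext i j
  simp only [Matrix.submatrix_apply, Matrix.sum_apply]

variable {n : Type*} [Fintype n]

theorem trace_submatrix_equiv {m R : Type*} [Fintype m] [AddCommMonoid R] (e : m ≃ n)
    (X : Matrix n n R) : (X.submatrix e e).trace = X.trace :=
  Equiv.sum_comp e fun i => X i i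

theorem sum_norm_sq_eq_trace (A : Matrix n n ℂ) :
    ∑ i, ∑ j, ‖A i j‖ ^ 2 = (Aᴴ * A).trace.re := by
  rw [Finset.sum_comm]
  simp [Matrix.trace, Matrix.mul_apply, Complex.sq_norm, Complex.normSq_apply]

variable [DecidableEq n]

theorem continuous_matrix_exp : Continuous (NormedSpace.exp : Matrix n n ℂ → Matrix n n ℂ) :=
  NormedSpace.exp_continuous

theorem hasDerivAt_trace_exp_add_smul_mul (X Y B : Matrix n n ℂ) :
    HasDerivAt (fun s : ℝ => (NormedSpace.exp (X + s • Y) * B).trace)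
      (∫ t in (0 : ℝ)..1,
        (NormedSpace.exp ((1 - t) • X) * Y * NormedSpace.exp (t • X) * B).trace) 0 := by
  let L : Matrix n n ℂ →L[ℝ] ℂ := LinearMap.toContinuousLinearMap
    ((Matrix.traceLinearMap n ℝ ℂ).comp (LinearMap.mulRight ℝ B))
  have := continuous_matrix_exp (n := n)
  have trace_integral := L.intervalIntegral_comp_comm (μ := volume) (a := 0) (b := 1)
    (f := fun t : ℝ => NormedSpace.exp ((1 - t) • X) * Y * NormedSpace.exp (t • X))
    (by apply Continuous.intervalIntegrable; fun_prop)
  exact trace_integral ▸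
    L.hasFDerivAt.comp_hasDerivAt (0 : ℝ) (hasDerivAt_exp_add_smul X Y)

theorem exp_one_sub_smul_mul_exp_smul (X : Matrix n n ℂ) (t : ℝ) :
    NormedSpace.exp ((1 - t) • X) * NormedSpace.exp (t • X) = NormedSpace.exp X := by
  rw [← Matrix.exp_add_of_commute _ _ (((Commute.refl X).smul_left _).smul_right _), ← add_smul,
    sub_add_cancel, one_smul]

theorem hasDerivAt_trace_exp_add_smul (X Y : Matrix n n ℂ) :
    HasDerivAt (fun s : ℝ => (NormedSpace.exp (X + s • Y)).trace)
      (NormedSpace.exp X * Y).trace 0 := by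
  have cyclic : ∀ t : ℝ, (NormedSpace.exp ((1 - t) • X) * Y * NormedSpace.exp (t • X)).trace
      = (NormedSpace.exp X * Y).trace := by
    intro t
    have := exp_one_sub_smul_mul_exp_smul X (1 - t)
    rw [sub_sub_cancel] at this
    rw [Matrix.trace_mul_comm, ← mul_assoc, this]
  simpa [cyclic] using hasDerivAt_trace_exp_add_smul_mul X Y 1

theorem exp_submatrix_equiv {m : Type*} [Fintype m] [DecidableEq m] (e : m ≃ n)
    (X : Matrix n n ℂ) :
    NormedSpace.exp (X.submatrix e e) = (NormedSpace.exp X).submatrix e e :=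
  (NormedSpace.map_exp (Matrix.reindexAlgEquiv ℂ ℂ e.symm)
    (continuous_id.matrix_submatrix _ _) X).symm

theorem trace_conjStarAlgAut (U : unitary (Matrix n n ℂ)) (X : Matrix n n ℂ) :
    (Unitary.conjStarAlgAut ℂ _ U X).trace = X.trace := by
  rw [Unitary.conjStarAlgAut_apply, Matrix.trace_mul_cycle, Unitary.coe_star_mul_self, one_mul]

theorem exp_conjStarAlgAut (U : unitary (Matrix n n ℂ)) (X : Matrix n n ℂ) :
    NormedSpace.exp (Unitary.conjStarAlgAut ℂ _ U X)
      = Unitary.conjStarAlgAut ℂ _ U (NormedSpace.exp X) :=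
  (NormedSpace.map_exp (Unitary.conjStarAlgAut ℂ (Matrix n n ℂ) U)
    ((continuous_const.mul continuous_id).mul continuous_const) X).symm

theorem exp_smul_of_isHermitian {X : Matrix n n ℂ} (hX : X.IsHermitian) (s : ℝ) :
    NormedSpace.exp (s • X) = Unitary.conjStarAlgAut ℂ _ hX.eigenvectorUnitary
      (Matrix.diagonal fun i => (Real.exp (s * hX.eigenvalues i) : ℂ)) := by
  have diagonalization : s • X = Unitary.conjStarAlgAut ℂ _ hX.eigenvectorUnitary
      (Matrix.diagonal fun i => ((s * hX.eigenvalues i : ℝ) : ℂ)) := by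
    conv_lhs => rw [hX.spectral_theorem]
    rw [← Complex.coe_smul, ← map_smul, ← Matrix.diagonal_smul]
    congr 2
    ext i
    simp
  rw [diagonalization, exp_conjStarAlgAut, Matrix.exp_diagonal, Pi.exp_def]
  simp [Complex.exp_eq_exp_ℂ]

/-- The matrix of `A` in the orthonormal eigenbasis of the Hermitian matrix `X` that Mathlib
chooses; traces of products of `A` with exponentials of multiples of `X` are read off from its
entries. -/
def eigenbasisMatrix {X : Matrix n n ℂ} (hX : X.IsHermitian) (A : Matrix n n ℂ) :
    Matrix n n ℂ :=
  (Unitary.conjStarAlgAut ℂ _ hX.eigenvectorUnitary).symm A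

variable {X : Matrix n n ℂ} (hX : X.IsHermitian)

theorem conjStarAlgAut_eigenbasisMatrix (A : Matrix n n ℂ) :
    Unitary.conjStarAlgAut ℂ _ hX.eigenvectorUnitary (eigenbasisMatrix hX A) = A :=
  StarAlgEquiv.apply_symm_apply _ A

theorem sum_norm_sq_eigenbasisMatrix (A : Matrix n n ℂ) :
    ∑ i, ∑ j, ‖eigenbasisMatrix hX A i j‖ ^ 2 = (Aᴴ * A).trace.re := by
  conv_rhs => rw [← conjStarAlgAut_eigenbasisMatrix hX A, ← Matrix.star_eq_conjTranspose,
    ← map_star, ← map_mul, trace_conjStarAlgAut]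
  exact sum_norm_sq_eq_trace _

theorem trace_exp_mul_of_isHermitian (A : Matrix n n ℂ) :
    (NormedSpace.exp X * A).trace
      = ∑ i, (Real.exp (hX.eigenvalues i) : ℂ) * eigenbasisMatrix hX A i i := by
  have exp_X := exp_smul_of_isHermitian hX 1
  simp only [one_smul, one_mul] at exp_X
  conv_lhs => rw [exp_X, ← conjStarAlgAut_eigenbasisMatrix hX A, ← map_mul, trace_conjStarAlgAut]
  simp [Matrix.trace, Matrix.diagonal_mul]

theorem trace_exp_of_isHermitian :
    (NormedSpace.exp X).trace = ((∑ i, Real.exp (hX.eigenvalues i) : ℝ) : ℂ) := by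
  simpa [eigenbasisMatrix] using trace_exp_mul_of_isHermitian hX 1

theorem trace_exp_mul_conjTranspose_mul_exp_mul (A : Matrix n n ℂ) (r s : ℝ) :
    (NormedSpace.exp (r • X) * Aᴴ * NormedSpace.exp (s • X) * A).trace
      = ((∑ j, ∑ i, Real.exp (r * hX.eigenvalues j + s * hX.eigenvalues i)
          * ‖eigenbasisMatrix hX A i j‖ ^ 2 : ℝ) : ℂ) := by
  conv_lhs => rw [exp_smul_of_isHermitian hX, exp_smul_of_isHermitian hX,
    ← conjStarAlgAut_eigenbasisMatrix hX A, ← Matrix.star_eq_conjTranspose, ← map_star, ← map_mul,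
    ← map_mul, ← map_mul, trace_conjStarAlgAut]
  push_cast
  simp only [Matrix.trace, Matrix.diag_apply, Matrix.mul_apply (N := eigenbasisMatrix hX A),
    Matrix.mul_diagonal, Matrix.diagonal_mul, Matrix.star_apply, ← Complex.conj_mul',
    Complex.exp_add]
  refine Finset.sum_congr rfl fun i _ => Finset.sum_congr rfl fun j _ => ?_
  simp only [Complex.star_def]
  ring

end MatrixExponential

section Gibbs

variable {n : Type*} [Fintype n] [DecidableEq n]

/-- The covariance `⟨A|B⟩ - ⟨A⟩⟨B⟩` of the Duhamel product in the Gibbs state of `H`, which is the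
linear response of `⟨B⟩` to a perturbation of `H` in the direction of a Hermitian `A`. -/
def duhamelCov (β : ℝ) (H A B : Matrix n n ℂ) : ℝ :=
  duhamel β H A B - gibbs β H A * gibbs β H B

theorem trace_exp_ne_zero [Nonempty n] {X : Matrix n n ℂ} (hX : X.IsHermitian) :
    (NormedSpace.exp X).trace ≠ 0 := by
  rw [trace_exp_of_isHermitian hX, Complex.ofReal_ne_zero]
  exact (Finset.sum_pos (fun i _ => Real.exp_pos _) Finset.univ_nonempty).ne'

theorem gibbs_smul_sum {ι : Type*} [Fintype ι] (β : ℝ) (H : Matrix n n ℂ) (c : ℝ) (x : ι → ℝ)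
    (A : ι → Matrix n n ℂ) :
    gibbs β H (c • ∑ p, x p • A p) = c * ∑ p, x p * gibbs β H (A p) := by
  simp only [gibbs, Matrix.mul_smul, Matrix.mul_sum, Matrix.trace_smul, Matrix.trace_sum,
    smul_div_assoc, Finset.sum_div, Complex.smul_re, Complex.re_sum, smul_eq_mul]

theorem gibbs_exp_mul (β t : ℝ) (H A B : Matrix n n ℂ) :
    gibbs β H (NormedSpace.exp ((t * β) • H) * A * NormedSpace.exp ((-(t * β)) • H) * B)
      = ((NormedSpace.exp ((1 - t) • (-β) • H) * A * NormedSpace.exp (t • (-β) • H) * B).trace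
          / (NormedSpace.exp ((-β) • H)).trace).re := by
  have exp_mul_exp : NormedSpace.exp ((-β) • H) * NormedSpace.exp ((t * β) • H)
      = NormedSpace.exp ((1 - t) • (-β) • H) := by
    rw [← Matrix.exp_add_of_commute _ _ (((Commute.refl H).smul_left _).smul_right _)]
    congr 1
    module
  have exp_neg : NormedSpace.exp ((-(t * β)) • H) = NormedSpace.exp (t • (-β) • H) := by
    rw [smul_smul, mul_neg]
  rw [gibbs, exp_neg, ← mul_assoc, ← mul_assoc, ← mul_assoc, exp_mul_exp]

theorem gibbs_submatrix_equiv {m : Type*} [Fintype m] [DecidableEq m] (e : m ≃ n) (β : ℝ)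
    (H A : Matrix n n ℂ) : gibbs β (H.submatrix e e) (A.submatrix e e) = gibbs β H A := by
  have smul_submatrix : ∀ c : ℝ, c • H.submatrix e e = (c • H).submatrix e e := fun _ => rfl
  simp only [gibbs, smul_submatrix, exp_submatrix_equiv, Matrix.submatrix_mul_equiv,
    trace_submatrix_equiv]

theorem duhamelCov_submatrix_equiv {m : Type*} [Fintype m] [DecidableEq m] (e : m ≃ n) (β : ℝ)
    (H A B : Matrix n n ℂ) :
    duhamelCov β (H.submatrix e e) (A.submatrix e e) (B.submatrix e e) = duhamelCov β H A B := by
  have smul_submatrix : ∀ c : ℝ, c • H.submatrix e e = (c • H).submatrix e e := fun _ => rfl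
  simp only [duhamelCov, duhamel, smul_submatrix, exp_submatrix_equiv,
    Matrix.conjTranspose_submatrix, Matrix.submatrix_mul_equiv, gibbs_submatrix_equiv]

theorem abs_gibbs_le_sqrt_trace {H : Matrix n n ℂ} (hH : H.IsHermitian) (β : ℝ)
    (A : Matrix n n ℂ) :
    |gibbs β H A| ≤ √((Aᴴ * A).trace.re) := by
  have hX := isHermitian_real_smul hH (-β)
  have entry_le : ∀ i, ‖eigenbasisMatrix hX A i i‖ ≤ √((Aᴴ * A).trace.re) := by
    intro i
    refine Real.le_sqrt_of_sq_le ?_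
    rw [← sum_norm_sq_eigenbasisMatrix hX A]
    exact (Finset.single_le_sum (f := fun j => ‖eigenbasisMatrix hX A i j‖ ^ 2)
        (fun j _ => by positivity) (Finset.mem_univ i)).trans
      (Finset.single_le_sum (f := fun i => ∑ j, ‖eigenbasisMatrix hX A i j‖ ^ 2)
        (fun i _ => by positivity) (Finset.mem_univ i))
  refine (Complex.abs_re_le_norm _).trans ?_
  rw [norm_div, trace_exp_mul_of_isHermitian hX, trace_exp_of_isHermitian hX, Complex.norm_real,
    Real.norm_of_nonneg (by positivity)]
  refine div_le_of_le_mul₀ (by positivity) (by positivity) ?_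
  rw [mul_comm, Finset.sum_mul]
  refine norm_sum_le_of_le _ fun i _ => ?_
  rw [norm_mul, Complex.norm_real, Real.norm_of_nonneg (Real.exp_nonneg _)]
  exact mul_le_mul_of_nonneg_left (entry_le i) (Real.exp_nonneg _)

theorem gibbs_exp_conjTranspose_mul_self_mem_Icc {H : Matrix n n ℂ} (hH : H.IsHermitian)
    (β : ℝ) (A : Matrix n n ℂ) {t : ℝ} (ht : t ∈ Set.Icc (0 : ℝ) 1) :
    gibbs β H (NormedSpace.exp ((t * β) • H) * Aᴴ * NormedSpace.exp ((-(t * β)) • H) * A)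
      ∈ Set.Icc 0 (Aᴴ * A).trace.re := by
  have hX := isHermitian_real_smul hH (-β)
  rw [gibbs_exp_mul, trace_exp_mul_conjTranspose_mul_exp_mul hX, trace_exp_of_isHermitian hX,
    ← Complex.ofReal_div, Complex.ofReal_re]
  refine ⟨by positivity, div_le_of_le_mul₀ (by positivity) ?_ ?_⟩
  · rw [← sum_norm_sq_eigenbasisMatrix hX A]
    positivity
  · rw [← sum_norm_sq_eigenbasisMatrix hX A, Finset.sum_comm, mul_comm, Finset.mul_sum]
    refine Finset.sum_le_sum fun i _ => ?_
    rw [Finset.mul_sum]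
    exact Finset.sum_le_sum fun j _ =>
      mul_le_mul_of_nonneg_right (exp_convex_combination_le_sum _ ht i j) (by positivity)

theorem abs_duhamelCov_self_le_trace {H : Matrix n n ℂ} (hH : H.IsHermitian) (β : ℝ)
    (A : Matrix n n ℂ) :
    |duhamelCov β H A A| ≤ (Aᴴ * A).trace.re := by
  have integrand_mem_Icc := fun t => gibbs_exp_conjTranspose_mul_self_mem_Icc hH β A (t := t)
  have duhamel_nonneg : 0 ≤ duhamel β H A A :=
    intervalIntegral.integral_nonneg zero_le_one fun t ht => (integrand_mem_Icc t ht).1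
  have duhamel_le : duhamel β H A A ≤ (Aᴴ * A).trace.re := by
    have norm_le : ‖duhamel β H A A‖ ≤ (Aᴴ * A).trace.re * |1 - 0| :=
      intervalIntegral.norm_integral_le_of_norm_le_const fun t ht => by
        have ht' := integrand_mem_Icc t
          (Set.Ioc_subset_Icc_self (Set.uIoc_of_le (zero_le_one' ℝ) ▸ ht))
        exact (Real.norm_of_nonneg ht'.1).trans_le ht'.2
    simpa using (le_abs_self _).trans norm_le
  have gibbs_sq_le : gibbs β H A * gibbs β H A ≤ (Aᴴ * A).trace.re := by
    rw [← sq, ← sq_abs, ← Real.le_sqrt (abs_nonneg _) (duhamel_nonneg.trans duhamel_le)]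
    exact abs_gibbs_le_sqrt_trace hH β A
  exact abs_sub_le_of_nonneg_of_le duhamel_nonneg duhamel_le (mul_self_nonneg _) gibbs_sq_le

theorem ofReal_gibbs_of_isHermitian {H : Matrix n n ℂ} (hH : H.IsHermitian) (β : ℝ)
    {A : Matrix n n ℂ} (hA : A.IsHermitian) :
    (gibbs β H A : ℂ)
      = (NormedSpace.exp ((-β) • H) * A).trace / (NormedSpace.exp ((-β) • H)).trace := by
  have hE : (NormedSpace.exp ((-β) • H)).IsHermitian := (isHermitian_real_smul hH (-β)).exp
  refine Complex.conj_eq_iff_re.1 ?_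
  rw [map_div₀, starRingEnd_apply, starRingEnd_apply, ← Matrix.trace_conjTranspose,
    ← Matrix.trace_conjTranspose, Matrix.conjTranspose_mul, hE.eq, hA.eq, Matrix.trace_mul_comm]

section Response

theorem duhamel_eq_re_integral_trace (β : ℝ) (H A B : Matrix n n ℂ) :
    duhamel β H A B = ((∫ t in (0 : ℝ)..1,
        (NormedSpace.exp ((1 - t) • (-β) • H) * Aᴴ * NormedSpace.exp (t • (-β) • H) * B).trace)
          / (NormedSpace.exp ((-β) • H)).trace).re := by
  have := continuous_matrix_exp (n := n)
  rw [← intervalIntegral.integral_div, duhamel]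
  simp only [gibbs_exp_mul]
  refine Complex.reCLM.intervalIntegral_comp_comm (μ := volume) (a := 0) (b := 1)
    (f := fun t : ℝ => (NormedSpace.exp ((1 - t) • (-β) • H) * Aᴴ * NormedSpace.exp (t • (-β) • H)
      * B).trace / (NormedSpace.exp ((-β) • H)).trace) ?_
  apply Continuous.intervalIntegrable
  fun_prop

variable [Nonempty n]

theorem hasDerivAt_gibbs_add_smul {H : Matrix n n ℂ} (hH : H.IsHermitian) (β : ℝ)
    {A : Matrix n n ℂ} (hA : A.IsHermitian) (B : Matrix n n ℂ) :
    HasDerivAt (fun u : ℝ => gibbs β (H + u • A) B) (-β * duhamelCov β H A B) 0 := by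
  have Z_ne_zero := trace_exp_ne_zero (isHermitian_real_smul hH (-β))
  have perturbation : ∀ u : ℝ, (-β) • (H + u • A) = (-β) • H + u • (-β) • A := fun u => by
    rw [smul_add, smul_comm]
  have quotient := (hasDerivAt_trace_exp_add_smul_mul ((-β) • H) ((-β) • A) B).div
    (hasDerivAt_trace_exp_add_smul ((-β) • H) ((-β) • A)) (by simpa using Z_ne_zero)
  simp only [← perturbation, zero_smul, add_zero] at quotient
  refine (Complex.reCLM.hasFDerivAt.comp_hasDerivAt (0 : ℝ) quotient).congr_deriv ?_
  have gibbs_mul_gibbs : gibbs β H A * gibbs β H B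
      = ((gibbs β H A : ℂ)
          * ((NormedSpace.exp ((-β) • H) * B).trace / (NormedSpace.exp ((-β) • H)).trace)).re :=
    (Complex.re_ofReal_mul _ _).symm
  rw [duhamelCov, gibbs_mul_gibbs, ofReal_gibbs_of_isHermitian hH β hA,
    duhamel_eq_re_integral_trace, hA.eq, ← Complex.sub_re, ← Complex.re_ofReal_mul]
  simp only [Complex.reCLM_apply, Matrix.mul_smul, Matrix.smul_mul, Matrix.trace_smul,
    Complex.real_smul, intervalIntegral.integral_const_mul]
  congr 1
  field_simp

variable {T : Type*} [TopologicalSpace T] {K : T → Matrix n n ℂ}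

theorem continuous_gibbs (β : ℝ) (hK : Continuous K) (hKh : ∀ x, (K x).IsHermitian)
    {F : T → Matrix n n ℂ} (hF : Continuous F) : Continuous fun x => gibbs β (K x) (F x) := by
  have := continuous_matrix_exp (n := n)
  refine Complex.continuous_re.comp (Continuous.div (by fun_prop) (by fun_prop) fun x => ?_)
  exact trace_exp_ne_zero (isHermitian_real_smul (hKh x) _)

theorem continuous_duhamelCov (β : ℝ) (hK : Continuous K) (hKh : ∀ x, (K x).IsHermitian)
    (A B : Matrix n n ℂ) : Continuous fun x => duhamelCov β (K x) A B := by
  have := continuous_matrix_exp (n := n)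
  have integrand_continuous : Continuous fun z : T × ℝ => gibbs β (K z.1)
      (NormedSpace.exp ((z.2 * β) • K z.1) * Aᴴ * NormedSpace.exp ((-(z.2 * β)) • K z.1) * B) :=
    continuous_gibbs β (hK.comp continuous_fst) (fun z => hKh z.1) (by fun_prop)
  exact (intervalIntegral.continuous_parametric_intervalIntegral_of_continuous'
    integrand_continuous 0 1).sub
      ((continuous_gibbs β hK hKh continuous_const).mul
        (continuous_gibbs β hK hKh continuous_const))

end Response

end Gibbs

section Gaussian

open scoped NNReal

theorem hasDerivAt_gaussianPDFReal (m : ℝ) (v : ℝ≥0) (x : ℝ) :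
    HasDerivAt (gaussianPDFReal m v) (-((x - m) / v) * gaussianPDFReal m v x) x := by
  have exponent : HasDerivAt (fun x : ℝ => -(x - m) ^ 2 / (2 * v)) (-((x - m) / v)) x :=
    ((((hasDerivAt_id x).sub_const m).pow 2).neg.div_const (2 * (v : ℝ))).congr_deriv (by
      simp only [id]; ring)
  rw [gaussianPDFReal_def]
  exact (exponent.exp.const_mul _).congr_deriv (by ring)

theorem integrable_gaussianReal_iff {m : ℝ} {v : ℝ≥0} (hv : v ≠ 0) {f : ℝ → ℝ} :
    Integrable f (gaussianReal m v) ↔ Integrable fun x => f x * gaussianPDFReal m v x := by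
  rw [gaussianReal_of_var_ne_zero _ hv, integrable_withDensity_iff (measurable_gaussianPDF _ _)
    (Filter.Eventually.of_forall fun _ => gaussianPDF_lt_top)]
  simp only [toReal_gaussianPDF]

theorem integral_sub_mul_gaussianReal {m : ℝ} {v : ℝ≥0} {f f' : ℝ → ℝ}
    (hf : ∀ x, HasDerivAt f (f' x) x) (f_int : Integrable f (gaussianReal m v))
    (f'_int : Integrable f' (gaussianReal m v))
    (mul_f_int : Integrable (fun x => (x - m) * f x) (gaussianReal m v)) :
    ∫ x, (x - m) * f x ∂gaussianReal m v = v * ∫ x, f' x ∂gaussianReal m v := by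
  rcases eq_or_ne v 0 with rfl | hv
  · simp [gaussianReal_zero_var]
  rw [integrable_gaussianReal_iff hv] at f_int f'_int mul_f_int
  have hv' : (v : ℝ) ≠ 0 := NNReal.coe_ne_zero.2 hv
  have product_eq : ∀ x, f x * (-((x - m) / v) * gaussianPDFReal m v x)
      = -(v : ℝ)⁻¹ * ((x - m) * f x * gaussianPDFReal m v x) := fun x => by ring
  have by_parts := integral_mul_deriv_eq_deriv_mul_of_integrable (fun x _ => hf x)
    (fun x _ => hasDerivAt_gaussianPDFReal m v x)
    ((mul_f_int.const_mul (-(v : ℝ)⁻¹)).congr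
      (Filter.Eventually.of_forall fun x => (product_eq x).symm)) f'_int f_int
  simp only [product_eq, integral_const_mul] at by_parts
  simp only [integral_gaussianReal_eq_integral_smul hv, smul_eq_mul,
    mul_comm (gaussianPDFReal m v _)]
  field_simp at by_parts
  linarith

variable {ι : Type*} [Fintype ι] [DecidableEq ι]

theorem measurePreserving_update {E : ι → Type*} [∀ i, MeasurableSpace (E i)]
    (μ : ∀ i, Measure (E i)) [∀ i, SigmaFinite (μ i)] (p : ι) [IsProbabilityMeasure (μ p)] :
    MeasurePreserving (fun z : (∀ i, E i) × E p => Function.update z.1 p z.2)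
      ((Measure.pi μ).prod (μ p)) (Measure.pi μ) := by
  refine ⟨measurable_update', (Measure.pi_eq fun s hs => ?_).symm⟩
  have preimage_box : (fun z : (∀ i, E i) × E p => Function.update z.1 p z.2) ⁻¹' Set.univ.pi s
      = (Set.univ.pi (Function.update s p Set.univ)) ×ˢ (s p) := by
    ext z
    simp only [Set.mem_preimage, Set.mem_univ_pi, Set.mem_prod,
      Function.forall_update_iff z.1 (p := fun i y => y ∈ s i),
      Function.forall_update_iff s (p := fun i t => z.1 i ∈ t), Set.mem_univ, true_and]
    exact and_comm
  rw [Measure.map_apply measurable_update' (MeasurableSet.univ_pi hs), preimage_box,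
    Measure.prod_prod, Measure.pi_pi, ← Finset.prod_erase_mul _ _ (Finset.mem_univ p),
    ← Finset.prod_erase_mul _ (fun i => μ i (s i)) (Finset.mem_univ p), Function.update_self,
    measure_univ, mul_one]
  congr 1
  refine Finset.prod_congr rfl fun i hi => ?_
  rw [Function.update_of_ne (Finset.ne_of_mem_erase hi)]

section Update

variable {E : ι → Type*} [∀ i, MeasurableSpace (E i)] {μ : ∀ i, Measure (E i)}
  [∀ i, SigmaFinite (μ i)] (p : ι) [IsProbabilityMeasure (μ p)] {V : Type*} [NormedAddCommGroup V]
  {G : (∀ i, E i) → V}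

theorem ae_integrable_update (hG : Integrable G (Measure.pi μ)) :
    ∀ᵐ x ∂Measure.pi μ, Integrable (fun s => G (Function.update x p s)) (μ p) :=
  ((measurePreserving_update μ p).integrable_comp_of_integrable hG).prod_right_ae

theorem integral_pi_eq_integral_integral_update [NormedSpace ℝ V]
    (hG : Integrable G (Measure.pi μ)) :
    ∫ x, G x ∂Measure.pi μ = ∫ x, ∫ s, G (Function.update x p s) ∂μ p ∂Measure.pi μ := by
  have resample := measurePreserving_update μ p
  conv_lhs => rw [← resample.map_eq]
  rw [integral_map resample.measurable.aemeasurable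
    (resample.map_eq.symm ▸ hG.aestronglyMeasurable)]
  exact integral_prod _ (resample.integrable_comp_of_integrable hG)

end Update

theorem integral_eval_sub_mul_pi_gaussianReal {m : ι → ℝ} {v : ι → ℝ≥0} (p : ι)
    {F F' : (ι → ℝ) → ℝ}
    (hF : ∀ x, HasDerivAt (fun s => F (Function.update x p s)) (F' x) (x p))
    (F_int : Integrable F (Measure.pi fun i => gaussianReal (m i) (v i)))
    (F'_int : Integrable F' (Measure.pi fun i => gaussianReal (m i) (v i)))
    (mul_F_int : Integrable (fun x => (x p - m p) * F x)
      (Measure.pi fun i => gaussianReal (m i) (v i))) :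
    ∫ x, (x p - m p) * F x ∂(Measure.pi fun i => gaussianReal (m i) (v i))
      = v p * ∫ x, F' x ∂(Measure.pi fun i => gaussianReal (m i) (v i)) := by
  rw [integral_pi_eq_integral_integral_update p mul_F_int,
    integral_pi_eq_integral_integral_update p F'_int, ← integral_const_mul]
  refine integral_congr_ae ?_
  filter_upwards [ae_integrable_update p F_int, ae_integrable_update p F'_int,
    ae_integrable_update p mul_F_int] with x F_int F'_int mul_F_int
  simp only [Function.update_self] at mul_F_int ⊢
  refine integral_sub_mul_gaussianReal (fun s => ?_) F_int F'_int mul_F_int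
  simpa using hF (Function.update x p s)

end Gaussian

section LinearDisorder

variable {n ι : Type*} [Fintype ι]

/-- The Hamiltonian `B + c ∑ p, x p • A p`, in which the disorder variables `x p` couple linearly to
the interactions `A p`. -/
def linearHamiltonian (B : Matrix n n ℂ) (c : ℝ) (A : ι → Matrix n n ℂ) (x : ι → ℝ) :
    Matrix n n ℂ :=
  B + c • ∑ p, x p • A p

theorem isHermitian_linearHamiltonian {B : Matrix n n ℂ} (hB : B.IsHermitian) (c : ℝ)
    {A : ι → Matrix n n ℂ} (hA : ∀ p, (A p).IsHermitian) (x : ι → ℝ) :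
    (linearHamiltonian B c A x).IsHermitian :=
  hB.add (isHermitian_real_smul
    (isSelfAdjoint_sum _ fun p _ => isHermitian_real_smul (hA p) (x p)) c)

theorem continuous_linearHamiltonian (B : Matrix n n ℂ) (c : ℝ) (A : ι → Matrix n n ℂ) :
    Continuous (linearHamiltonian B c A) := by
  unfold linearHamiltonian
  fun_prop

theorem linearHamiltonian_update [DecidableEq ι] (B : Matrix n n ℂ) (c : ℝ)
    (A : ι → Matrix n n ℂ) (x : ι → ℝ) (p : ι) (s : ℝ) :
    linearHamiltonian B c A (Function.update x p s)
      = linearHamiltonian B c A x + (c * (s - x p)) • A p := by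
  have sum_update : ∑ q, Function.update x p s q • A q = ∑ q, x q • A q + (s - x p) • A p := by
    rw [← sub_eq_iff_eq_add', ← Finset.sum_sub_distrib, Finset.sum_eq_single p]
    · rw [Function.update_self, sub_smul]
    · intro q _ hq
      rw [Function.update_of_ne hq, sub_self]
    · simp
  rw [linearHamiltonian, linearHamiltonian, sum_update, smul_add, smul_smul, add_assoc]

theorem linearHamiltonian_submatrix_equiv {B : Matrix n n ℂ} (c : ℝ) {A : ι → Matrix n n ℂ}
    (e : n ≃ n) (φ : ι ≃ ι) (hB : B.submatrix e e = B)
    (hA : ∀ p, (A p).submatrix e e = A (φ p)) (x : ι → ℝ) :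
    (linearHamiltonian B c A (x ∘ φ)).submatrix e e = linearHamiltonian B c A x := by
  have interaction_submatrix : (∑ p, x (φ p) • A p).submatrix e e = ∑ p, x p • A p := by
    rw [sum_submatrix, ← Equiv.sum_comp φ fun p => x p • A p]
    exact Finset.sum_congr rfl fun p _ => congrArg (x (φ p) • ·) (hA p)
  have smul_submatrix := congrArg (c • ·) interaction_submatrix
  exact congrArg₂ (· + ·) hB smul_submatrix

variable [Fintype n] [DecidableEq n]

theorem integral_duhamelCov_linearHamiltonian_equiv (ν : Measure ℝ) [SigmaFinite ν]
    {B : Matrix n n ℂ} (β c : ℝ) {A : ι → Matrix n n ℂ} (e : n ≃ n) (φ : ι ≃ ι)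
    (hB : B.submatrix e e = B) (hA : ∀ p, (A p).submatrix e e = A (φ p)) (p q : ι) :
    ∫ x, duhamelCov β (linearHamiltonian B c A x) (A (φ p)) (A (φ q)) ∂(Measure.pi fun _ => ν)
      = ∫ x, duhamelCov β (linearHamiltonian B c A x) (A p) (A q) ∂(Measure.pi fun _ => ν) := by
  symm
  rw [← (measurePreserving_piCongrLeft (fun _ : ι => ν) φ.symm).integral_comp']
  refine integral_congr_ae (Filter.Eventually.of_forall fun x => ?_)
  have permuted : MeasurableEquiv.piCongrLeft (fun _ : ι => ℝ) φ.symm x = x ∘ φ := by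
    ext i
    have := Equiv.piCongrLeft_apply_apply (fun _ : ι => ℝ) φ.symm x (φ i)
    rwa [Equiv.symm_apply_apply] at this
  simp only [permuted]
  rw [← duhamelCov_submatrix_equiv e β (linearHamiltonian B c A (x ∘ φ)), hA, hA,
    linearHamiltonian_submatrix_equiv c e φ hB hA]

variable [Nonempty n]

theorem hasDerivAt_gibbs_linearHamiltonian_update [DecidableEq ι] {B : Matrix n n ℂ}
    (hB : B.IsHermitian) (β c : ℝ) {A : ι → Matrix n n ℂ} (hA : ∀ p, (A p).IsHermitian)
    (C : Matrix n n ℂ) (p : ι) (x : ι → ℝ) :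
    HasDerivAt (fun s => gibbs β (linearHamiltonian B c A (Function.update x p s)) C)
      (-(β * c) * duhamelCov β (linearHamiltonian B c A x) (A p) C) (x p) := by
  simp only [linearHamiltonian_update]
  have displacement : HasDerivAt (fun s => c * (s - x p)) c (x p) := by
    simpa using ((hasDerivAt_id (x p)).sub_const (x p)).const_mul c
  have response := hasDerivAt_gibbs_add_smul (isHermitian_linearHamiltonian hB c hA x) β (hA p) C
  exact (response.comp_of_eq (x p) displacement (by simp)).congr_deriv (by ring)

theorem integrable_gibbs_linearHamiltonian (μ : Measure (ι → ℝ)) [IsFiniteMeasure μ]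
    {B : Matrix n n ℂ} (hB : B.IsHermitian) (β c : ℝ) {A : ι → Matrix n n ℂ}
    (hA : ∀ p, (A p).IsHermitian) (C : Matrix n n ℂ) :
    Integrable (fun x => gibbs β (linearHamiltonian B c A x) C) μ :=
  .of_bound (continuous_gibbs β (continuous_linearHamiltonian B c A)
      (isHermitian_linearHamiltonian hB c hA) continuous_const).aestronglyMeasurable _
    (Filter.Eventually.of_forall fun x =>
      abs_gibbs_le_sqrt_trace (isHermitian_linearHamiltonian hB c hA x) β C)

theorem integrable_duhamelCov_linearHamiltonian (μ : Measure (ι → ℝ)) [IsFiniteMeasure μ]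
    {B : Matrix n n ℂ} (hB : B.IsHermitian) (β c : ℝ) {A : ι → Matrix n n ℂ}
    (hA : ∀ p, (A p).IsHermitian) (C : Matrix n n ℂ) :
    Integrable (fun x => duhamelCov β (linearHamiltonian B c A x) C C) μ :=
  .of_bound (continuous_duhamelCov β (continuous_linearHamiltonian B c A)
      (isHermitian_linearHamiltonian hB c hA) C C).aestronglyMeasurable _
    (Filter.Eventually.of_forall fun x =>
      abs_duhamelCov_self_le_trace (isHermitian_linearHamiltonian hB c hA x) β C)

theorem integrable_sub_mul_gibbs_linearHamiltonian (m : ι → ℝ) (v : ι → NNReal)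
    {B : Matrix n n ℂ} (hB : B.IsHermitian) (β c : ℝ) {A : ι → Matrix n n ℂ}
    (hA : ∀ p, (A p).IsHermitian) (C : Matrix n n ℂ) (p : ι) :
    Integrable (fun x => (x p - m p) * gibbs β (linearHamiltonian B c A x) C)
      (Measure.pi fun i => gaussianReal (m i) (v i)) := by
  have eval_int : Integrable (fun x : ι → ℝ => x p)
      (Measure.pi fun i => gaussianReal (m i) (v i)) :=
    (measurePreserving_eval (fun i => gaussianReal (m i) (v i)) p).integrable_comp_of_integrable
      ((memLp_id_gaussianReal 1).integrable le_rfl)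
  refine (eval_int.sub (integrable_const (m p))).mul_bdd (c := √((Cᴴ * C).trace.re))
    (integrable_gibbs_linearHamiltonian _ hB β c hA C).aestronglyMeasurable
    (Filter.Eventually.of_forall fun x =>
      abs_gibbs_le_sqrt_trace (isHermitian_linearHamiltonian hB c hA x) β C)

theorem integral_sub_mul_gibbs_linearHamiltonian (m : ι → ℝ) (v : ι → NNReal)
    {B : Matrix n n ℂ} (hB : B.IsHermitian) (β c : ℝ) {A : ι → Matrix n n ℂ}
    (hA : ∀ p, (A p).IsHermitian) (p : ι) :
    ∫ x, (x p - m p) * gibbs β (linearHamiltonian B c A x) (A p)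
        ∂(Measure.pi fun i => gaussianReal (m i) (v i))
      = -(β * c * v p) * ∫ x, duhamelCov β (linearHamiltonian B c A x) (A p) (A p)
        ∂(Measure.pi fun i => gaussianReal (m i) (v i)) := by
  classical
  rw [integral_eval_sub_mul_pi_gaussianReal p
    (hasDerivAt_gibbs_linearHamiltonian_update hB β c hA (A p) p)
    (integrable_gibbs_linearHamiltonian _ hB β c hA (A p))
    ((integrable_duhamelCov_linearHamiltonian _ hB β c hA (A p)).const_mul _)
    (integrable_sub_mul_gibbs_linearHamiltonian m v hB β c hA (A p) p), integral_const_mul]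
  ring

theorem integral_gibbs_interaction {B : Matrix n n ℂ} (hB : B.IsHermitian) (β c κ : ℝ)
    {A : ι → Matrix n n ℂ} (hA : ∀ p, (A p).IsHermitian) :
    ∫ x, gibbs β (linearHamiltonian B c A x) (κ • ∑ p, x p • A p)
        ∂(Measure.pi fun _ => gaussianReal 0 1)
      = -(β * c * κ) * ∑ p, ∫ x, duhamelCov β (linearHamiltonian B c A x) (A p) (A p)
        ∂(Measure.pi fun _ => gaussianReal 0 1) := by
  have integration_by_parts := fun p =>
    integral_sub_mul_gibbs_linearHamiltonian (fun _ => 0) (fun _ => 1) hB β c hA p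
  have integrable := fun p =>
    integrable_sub_mul_gibbs_linearHamiltonian (fun _ => 0) (fun _ => 1) hB β c hA (A p) p
  simp only [sub_zero, NNReal.coe_one, mul_one] at integration_by_parts integrable
  simp only [gibbs_smul_sum, integral_const_mul]
  rw [integral_finsetSum _ fun p _ => integrable p]
  simp only [integration_by_parts, ← Finset.mul_sum]
  ring

end LinearDisorder

section SpinOperators

variable {N : ℕ}

theorem isHermitian_Sz (j : Fin N) : (Sz N j).IsHermitian :=
  Matrix.isHermitian_diagonal_iff.2 fun σ => by
    split_ifs <;> simp [IsSelfAdjoint]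

theorem commute_Sz (j k : Fin N) : Commute (Sz N j) (Sz N k) :=
  Matrix.commute_diagonal _ _

theorem isHermitian_Sx (j : Fin N) : (Sx N j).IsHermitian := by
  have flip_involutive : Function.Involutive fun σ : Conf N =>
      Function.update σ j (1 - σ j) := fun σ => by simp
  refine Matrix.IsHermitian.ext fun σ τ => ?_
  have flip_eq_iff : σ = Function.update τ j (1 - τ j) ↔ τ = Function.update σ j (1 - σ j) :=
    flip_involutive.eq_iff.symm.trans eq_comm
  simp only [Sx, Matrix.of_apply, flip_eq_iff, apply_ite star, star_one, star_zero]

/-- The action `σ ↦ σ ∘ π` of a permutation of the sites on spin configurations. -/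
def permConf (π : Equiv.Perm (Fin N)) : Conf N ≃ Conf N :=
  π.symm.arrowCongr (Equiv.refl _)

theorem permConf_apply (π : Equiv.Perm (Fin N)) (σ : Conf N) : permConf π σ = σ ∘ π :=
  rfl

theorem Sz_submatrix_permConf (π : Equiv.Perm (Fin N)) (j : Fin N) :
    (Sz N j).submatrix (permConf π) (permConf π) = Sz N (π j) :=
  Matrix.submatrix_diagonal_equiv _ _

theorem Sx_submatrix_permConf (π : Equiv.Perm (Fin N)) (j : Fin N) :
    (Sx N j).submatrix (permConf π) (permConf π) = Sx N (π j) := by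
  ext σ τ
  have flip_permConf : Function.update (permConf π σ) j (1 - permConf π σ j)
      = permConf π (Function.update σ (π j) (1 - σ (π j))) := by
    simp [permConf_apply, Function.update_comp_equiv]
  simp only [Sx, Matrix.submatrix_apply, Matrix.of_apply, flip_permConf,
    (permConf π).injective.eq_iff]

theorem sum_Sx_submatrix_permConf (π : Equiv.Perm (Fin N)) :
    (∑ j, Sx N j).submatrix (permConf π) (permConf π) = ∑ j, Sx N j := by
  rw [sum_submatrix]
  simp only [Sx_submatrix_permConf]
  exact Equiv.sum_comp π (Sx N)

end SpinOperators

section Bonds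

/-- The bonds of the complete graph on `N` sites, each encoded as an increasing pair of sites; they
index the independent couplings of the model. -/
abbrev Bond (N : ℕ) := {q : Fin N × Fin N // q.1 < q.2}

variable {N : ℕ}

theorem sum_ite_lt_eq_sum_bond {M : Type*} [AddCommMonoid M] (f : Fin N → Fin N → M) :
    (∑ j, ∑ k, if j < k then f j k else 0) = ∑ p : Bond N, f p.1.1 p.1.2 := by
  rw [← Finset.sum_product', ← Finset.sum_filter]
  exact Finset.sum_subtype _ (by simp) fun q : Fin N × Fin N => f q.1 q.2

theorem card_bond (N : ℕ) : Fintype.card (Bond N) = N.choose 2 := by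
  rw [Fintype.card_subtype, Fintype.card_product_filter_lt, Fintype.card_fin]

/-- The bond joining two distinct sites, in either order. -/
def bondOfNe {j k : Fin N} (h : j ≠ k) : Bond N :=
  ⟨(min j k, max j k), min_lt_max.2 h⟩

/-- The action of a permutation of the sites on bonds. -/
def permBond (π : Equiv.Perm (Fin N)) : Bond N ≃ Bond N where
  toFun p := bondOfNe (π.injective.ne p.2.ne)
  invFun p := bondOfNe (π.symm.injective.ne p.2.ne)
  left_inv p := by
    have := p.2.le
    rcases le_total (π p.1.1) (π p.1.2) with h | h <;> ext <;> simp [bondOfNe, h, this]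
  right_inv p := by
    have := p.2.le
    rcases le_total (π.symm p.1.1) (π.symm p.1.2) with h | h <;> ext <;> simp [bondOfNe, h, this]

theorem exists_permBond_eq (p q : Bond N) : ∃ π, permBond π p = q := by
  have := Equiv.Perm.isMultiplyPretransitive (Fin N) 2
  obtain ⟨π, h₁, h₂⟩ := MulAction.is_two_pretransitive_iff.1 this p.2.ne q.2.ne
  rw [Equiv.Perm.smul_def] at h₁ h₂
  exact ⟨π, Subtype.ext (by simp [permBond, bondOfNe, h₁, h₂, q.2.le])⟩

/-- The interaction of the two spins joined by a bond. -/
def bondOp (p : Bond N) : Matrix (Conf N) (Conf N) ℂ :=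
  Sz N p.1.1 * Sz N p.1.2

theorem isHermitian_bondOp (p : Bond N) : (bondOp p).IsHermitian :=
  ((isHermitian_Sz _).commute_iff (isHermitian_Sz _)).1 (commute_Sz _ _)

theorem bondOp_bondOfNe {j k : Fin N} (h : j ≠ k) : bondOp (bondOfNe h) = Sz N j * Sz N k := by
  rcases le_total j k with hjk | hkj
  · simp [bondOp, bondOfNe, hjk]
  · simpa [bondOp, bondOfNe, hkj] using (commute_Sz k j).eq

theorem bondOp_submatrix_permConf (π : Equiv.Perm (Fin N)) (p : Bond N) :
    (bondOp p).submatrix (permConf π) (permConf π) = bondOp (permBond π p) := by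
  have permuted : bondOp (permBond π p) = Sz N (π p.1.1) * Sz N (π p.1.2) :=
    bondOp_bondOfNe (π.injective.ne p.2.ne)
  rw [permuted, ← Sz_submatrix_permConf, ← Sz_submatrix_permConf,
    Matrix.submatrix_mul_equiv, bondOp]

end Bonds

section SherringtonKirkpatrick

variable {N : ℕ}

/-- The transverse-field part `-b ∑ j, Sx N j` of the Hamiltonian. -/
def transverseField (N : ℕ) (b : ℝ) : Matrix (Conf N) (Conf N) ℂ :=
  -(b • ∑ j, Sx N j)

theorem isHermitian_transverseField (N : ℕ) (b : ℝ) : (transverseField N b).IsHermitian :=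
  (isHermitian_real_smul (isSelfAdjoint_sum _ fun j _ => isHermitian_Sx j) b).neg

theorem transverseField_submatrix_permConf (b : ℝ) (π : Equiv.Perm (Fin N)) :
    (transverseField N b).submatrix (permConf π) (permConf π) = transverseField N b :=
  congrArg (fun X => -(b • X)) (sum_Sx_submatrix_permConf π)

theorem UN_eq_smul_sum_bondOp (g : Fin N → Fin N → ℝ) :
    UN N g = (-(1 / √N)) • ∑ p : Bond N, g p.1.1 p.1.2 • bondOp p := by
  rw [UN, sum_ite_lt_eq_sum_bond fun j k => g j k • (Sz N j * Sz N k)]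
  rfl

theorem HN_eq_linearHamiltonian (J b : ℝ) (g : Fin N → Fin N → ℝ) :
    HN N J b g = linearHamiltonian (transverseField N b) (J * -(1 / √N)) bondOp
      fun p => g p.1.1 p.1.2 := by
  rw [HN, UN_eq_smul_sum_bondOp, smul_smul, sub_eq_neg_add]
  rfl

theorem integral_duhamelCov_bondOp_eq (ν : Measure ℝ) [SigmaFinite ν] (β b c : ℝ)
    (p q : Bond N) :
    ∫ x, duhamelCov β (linearHamiltonian (transverseField N b) c bondOp x) (bondOp p) (bondOp p)
        ∂(Measure.pi fun _ => ν)
      = ∫ x, duhamelCov β (linearHamiltonian (transverseField N b) c bondOp x) (bondOp q)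
        (bondOp q) ∂(Measure.pi fun _ => ν) := by
  obtain ⟨π, rfl⟩ := exists_permBond_eq q p
  exact integral_duhamelCov_linearHamiltonian_equiv ν β c (permConf π) (permBond π)
    (transverseField_submatrix_permConf b π) (bondOp_submatrix_permConf π) q q

theorem integral_gibbs_sum_bondOp (β b c κ : ℝ) (p : Bond N) :
    ∫ x, gibbs β (linearHamiltonian (transverseField N b) c bondOp x) (κ • ∑ q, x q • bondOp q)
        ∂(Measure.pi fun _ => gaussianReal 0 1)
      = -(β * c * κ) * (N * (N - 1) / 2)
        * ∫ x, duhamelCov β (linearHamiltonian (transverseField N b) c bondOp x) (bondOp p)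
          (bondOp p) ∂(Measure.pi fun _ => gaussianReal 0 1) := by
  rw [integral_gibbs_interaction (isHermitian_transverseField N b) β c κ isHermitian_bondOp]
  simp only [integral_duhamelCov_bondOp_eq (gaussianReal 0 1) β b c _ p, Finset.sum_const,
    Finset.card_univ, card_bond, nsmul_eq_mul, Nat.cast_choose_two]
  ring

variable {Ω : Type*} [MeasurableSpace Ω] {μ : Measure Ω} {g : Ω → Fin N → Fin N → ℝ}

theorem hasLaw_couplings
    (hgauss : ∀ j k : Fin N, j < k → Measure.map (fun ω => g ω j k) μ = gaussianReal 0 1)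
    (hindep : iIndepFun (fun (p : Bond N) ω => g ω p.1.1 p.1.2) μ) :
    HasLaw (fun ω (p : Bond N) => g ω p.1.1 p.1.2) (Measure.pi fun _ => gaussianReal 0 1) μ :=
  hindep.hasLaw_pi fun p =>
    { aemeasurable := AEMeasurable.of_map_ne_zero
        (hgauss _ _ p.2 ▸ IsProbabilityMeasure.ne_zero (gaussianReal 0 1))
      map_eq := hgauss _ _ p.2 }

theorem integral_gibbs_UN
    (hgauss : ∀ j k : Fin N, j < k → Measure.map (fun ω => g ω j k) μ = gaussianReal 0 1)
    (hindep : iIndepFun (fun (p : Bond N) ω => g ω p.1.1 p.1.2) μ) (β J b : ℝ) (p : Bond N) :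
    ∫ ω, gibbs β (HN N J b (g ω)) (UN N (g ω)) ∂μ
      = -(β * J * ((N - 1) / 2))
        * ∫ ω, duhamelCov β (HN N J b (g ω)) (bondOp p) (bondOp p) ∂μ := by
  have law := hasLaw_couplings hgauss hindep
  have K_continuous :=
    continuous_linearHamiltonian (transverseField N b) (J * -(1 / √N)) (bondOp (N := N))
  have K_hermitian := isHermitian_linearHamiltonian (isHermitian_transverseField N b)
    (J * -(1 / √N)) isHermitian_bondOp
  have energy := law.integral_comp (continuous_gibbs β K_continuous K_hermitian
    (F := fun x => (-(1 / √N)) • ∑ q, x q • bondOp q) (by fun_prop)).aestronglyMeasurable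
  have covariance := law.integral_comp (continuous_duhamelCov β K_continuous K_hermitian
    (bondOp p) (bondOp p)).aestronglyMeasurable
  simp only [Function.comp_def, ← HN_eq_linearHamiltonian, ← UN_eq_smul_sum_bondOp]
    at energy covariance
  have hN : (N : ℝ) ≠ 0 := Nat.cast_ne_zero.2 p.1.1.pos.ne'
  have normalization : β * (J * -(1 / √N)) * -(1 / √N) * (N * (N - 1) / 2)
      = β * J * ((N - 1) / 2) := by
    have sqrt_sq : √(N : ℝ) ^ 2 = N := Real.sq_sqrt N.cast_nonneg
    field_simp
    rw [sqrt_sq]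
  rw [energy, covariance, integral_gibbs_sum_bondOp β b _ _ p, ← normalization]
  ring

theorem stmt1_general
    (hgauss : ∀ j k : Fin N, j < k → Measure.map (fun ω => g ω j k) μ = gaussianReal 0 1)
    (hindep : iIndepFun (fun (p : Bond N) ω => g ω p.1.1 p.1.2) μ)
    (β J b : ℝ) {j k : Fin N} (hjk : j ≠ k) :
    -(2 / ((N : ℝ) - 1)) * (∫ ω, gibbs β (HN N J b (g ω)) (UN N (g ω)) ∂μ)
      = β * J * ∫ ω, (duhamel β (HN N J b (g ω)) (Sz N j * Sz N k) (Sz N j * Sz N k)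
          - gibbs β (HN N J b (g ω)) (Sz N j * Sz N k) ^ 2) ∂μ := by
  have one_lt_N : 1 < N := by
    simpa using Fintype.one_lt_card_iff.2 ⟨j, k, hjk⟩
  have N_sub_one_ne_zero : (N : ℝ) - 1 ≠ 0 := sub_ne_zero.2 (Nat.cast_ne_one.2 one_lt_N.ne')
  rw [integral_gibbs_UN hgauss hindep β J b (bondOfNe hjk)]
  simp only [bondOp_bondOfNe, duhamelCov, ← sq]
  field_simp

end SherringtonKirkpatrick

theorem stmt1
    {Ω : Type*} [MeasurableSpace Ω] (μ : Measure Ω) [IsProbabilityMeasure μ]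
    (N : ℕ) (hN : 2 ≤ N) (β J b : ℝ) (hβ : 0 < β) (hJ : 0 < J) (hb : 0 ≤ b)
    (g : Ω → Fin N → Fin N → ℝ)
    (hmeas : ∀ j k : Fin N, Measurable fun ω => g ω j k)
    (hgauss : ∀ j k : Fin N, j < k →
      Measure.map (fun ω => g ω j k) μ = gaussianReal 0 1)
    (hindep : iIndepFun
      (fun (p : {q : Fin N × Fin N // q.1 < q.2}) ω => g ω p.1.1 p.1.2) μ) :
    -(2 / ((N : ℝ) - 1)) * (∫ ω, gibbs β (HN N J b (g ω)) (UN N (g ω)) ∂μ)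
      = β * J * ∫ ω,
          (duhamel β (HN N J b (g ω))
              (Sz N ⟨0, by omega⟩ * Sz N ⟨1, by omega⟩)
              (Sz N ⟨0, by omega⟩ * Sz N ⟨1, by omega⟩)
            - (gibbs β (HN N J b (g ω)) (Sz N ⟨0, by omega⟩ * Sz N ⟨1, by omega⟩)) ^ 2) ∂μ := by
  exact stmt1_general hgauss hindep β J b (by simp)
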